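/- Fix an integer N ≥ 1 and δ ∈ (0,1], set λ := ( log(2/δ)·β / ( 2·N·v·(β·𝔠_p + K_p·2^{p−1}) ) )^{1/p}, and define μ̂_N := (1/N)·Σ_{m=1}^N Trunc(λ·X_m)·X_m. Then with probability at least 1 − δ: ‖μ̂_N − μ‖ ≤ 2·( 2·v·(β·𝔠_p + K_p·2^{p−1}) )^{1/p}·( β·log(2/δ)/N )^{(p−1)/p}. -/

import Mathlib

open MeasureTheory
open scoped Classical

/-- `truncB x = min(1, ‖x‖)/‖x‖` for `x ≠ 0`, and `truncB 0 = 1`; so `truncB x • x` is the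
projection of `x` onto the closed unit ball. -/
noncomputable def truncB {B : Type*} [NormedAddCommGroup B] (x : B) : ℝ :=
  if x = 0 then 1 else min 1 ‖x‖ / ‖x‖

/-- `K_p = (1/p) ((p-1)/p)^{p-1}`. -/
noncomputable def Kp (p : ℝ) : ℝ := (1 / p) * ((p - 1) / p) ^ (p - 1)

/-- `𝔠_p(ρ) = 2^{p+1} (e^{2ρ} - 2ρ - 1)/(2ρ)²`. -/
noncomputable def frakC (p ρ : ℝ) : ℝ :=
  2 ^ (p + 1) * (Real.exp (2 * ρ) - 2 * ρ - 1) / (2 * ρ) ^ 2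

/-- chord bound for `cosh ∘ sqrt`. -/
theorem aux_chord {r A B w : ℝ} (hw0 : 0 ≤ w) (hw1 : w ≤ 1)
    (h : r ^ 2 = w * A ^ 2 + (1 - w) * B ^ 2) :
    Real.cosh r ≤ w * Real.cosh A + (1 - w) * Real.cosh B := by
  refine hasSum_le (fun n => ?_) (Real.hasSum_cosh r)
    (((Real.hasSum_cosh A).mul_left w).add ((Real.hasSum_cosh B).mul_left (1 - w)))
  have hc := (convexOn_pow n (𝕜 := ℝ)).2 (x := A ^ 2) (by simp [sq_nonneg]) (y := B ^ 2)
    (by simp [sq_nonneg]) hw0 (sub_nonneg.2 hw1) (by ring)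
  simp only [smul_eq_mul] at hc
  rw [pow_mul, pow_mul, pow_mul, h]
  have : (0:ℝ) < ((2 * n).factorial : ℝ) := by positivity
  rw [← mul_div_assoc, ← mul_div_assoc, ← add_div]
  gcongr

theorem aux_sinh_le {s : ℝ} (hs : 0 ≤ s) : Real.sinh s ≤ s * Real.cosh s := by
  refine hasSum_le (fun n => ?_) (Real.hasSum_sinh s) ((Real.hasSum_cosh s).mul_left s)
  rw [← mul_div_assoc, pow_succ, mul_comm s]
  gcongr
  omega

theorem aux_exp_neg {t : ℝ} (ht : 0 ≤ t) : 1 - t + t ^ 2 / 2 - t ^ 3 / 6 ≤ Real.exp (-t) := by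
  have h1 : ∀ u : ℝ, 0 ≤ u → Real.exp (-u) ≤ 1 - u + u ^ 2 / 2 := by
    intro u hu
    have hm : MonotoneOn (fun u : ℝ => 1 - u + u ^ 2 / 2 - Real.exp (-u)) (Set.Ici 0) := by
      apply monotoneOn_of_hasDerivWithinAt_nonneg (f' := fun u => -1 + u + Real.exp (-u))
        (convex_Ici 0) (by fun_prop)
      · intro x hx
        apply HasDerivAt.hasDerivWithinAt
        have := (((hasDerivAt_const x (1:ℝ)).sub (hasDerivAt_id x)).add
          (((hasDerivAt_id x).pow 2).div_const 2)).sub ((hasDerivAt_neg x).exp)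
        convert! this using 1
        simp
      · intro x hx
        have := Real.add_one_le_exp (-x)
        linarith
    have := hm (Set.mem_Ici.2 le_rfl) (Set.mem_Ici.2 hu) hu
    simp at this
    linarith
  have hm : MonotoneOn (fun u : ℝ => Real.exp (-u) - (1 - u + u ^ 2 / 2 - u ^ 3 / 6))
      (Set.Ici 0) := by
    apply monotoneOn_of_hasDerivWithinAt_nonneg
      (f' := fun u => (1 - u + u ^ 2 / 2) - Real.exp (-u)) (convex_Ici 0) (by fun_prop)
    · intro x hx
      apply HasDerivAt.hasDerivWithinAt
      have := ((hasDerivAt_neg x).exp).sub ((((hasDerivAt_const x (1:ℝ)).sub (hasDerivAt_id x)).add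
        (((hasDerivAt_id x).pow 2).div_const 2)).sub (((hasDerivAt_id x).pow 3).div_const 6))
      convert! this using 1
      simp
      ring
    · intro x hx
      simp at hx
      have := h1 x hx.le
      linarith
  have := hm (Set.mem_Ici.2 le_rfl) (Set.mem_Ici.2 ht) ht
  simp at this
  linarith

theorem aux_tsinh {t : ℝ} (ht : 0 ≤ t) (ht2 : t ≤ 2) :
    t * Real.sinh t ≤ 2 * (Real.exp t - 1 - t) := by
  have h1 := aux_exp_neg ht
  have h2 := Real.sum_le_exp_of_nonneg ht 4
  simp [Finset.sum_range_succ, Nat.factorial] at h2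
  rw [Real.sinh_eq]
  have h3 := mul_le_mul_of_nonneg_left h1 ht
  have h4 := mul_le_mul_of_nonneg_left h2 (by linarith : 0 ≤ 4 - t)
  have h5 : 0 ≤ t ^ 3 * (2 - t) := mul_nonneg (by positivity) (by linarith)
  nlinarith

theorem aux_exp_scale {c x : ℝ} (hc0 : 0 ≤ c) (hc1 : c ≤ 1) (hx : 0 ≤ x) :
    Real.exp (c * x) - 1 - c * x ≤ c ^ 2 * (Real.exp x - 1 - x) := by
  have e : ∀ y : ℝ, HasSum (fun n : ℕ => y ^ n / n.factorial) (Real.exp y) := fun y => by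
    rw [Real.exp_eq_exp_ℝ]; exact NormedSpace.expSeries_div_hasSum_exp y
  have e2 : ∀ y : ℝ, HasSum (fun n : ℕ => y ^ (n + 2) / (n + 2).factorial)
      (Real.exp y - 1 - y) := fun y => by
    have := (hasSum_nat_add_iff' 2).2 (e y)
    simpa [Finset.sum_range_succ, sub_sub] using this
  refine hasSum_le (fun n => ?_) (e2 (c * x)) ((e2 x).mul_left (c ^ 2))
  rw [← mul_div_assoc]
  gcongr
  rw [mul_pow]
  gcongr ?_ * _
  exact pow_le_pow_of_le_one hc0 hc1 (by omega)

/-- the two-point scalar inequality -/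
theorem aux_two_point {β a b s t : ℝ} (hβ : 1 ≤ β) (ha : 0 ≤ a) (hb : 0 ≤ b)
    (hs : 0 ≤ s) (ht : 0 ≤ t) (htβ : t ≤ 2)
    (has : a ≤ s + t) (has' : |s - t| ≤ a) (hbs : b ≤ s + t) (hbs' : |s - t| ≤ b)
    (h : a ^ 2 + b ^ 2 ≤ 2 * s ^ 2 + 2 * β ^ 2 * t ^ 2) :
    Real.cosh a + Real.cosh b ≤
      Real.cosh s * (2 + 2 * β ^ 2 * (Real.exp t - 1 - t)) := by
  have hcs := Real.cosh_pos s
  have hbeta : 0 ≤ β ^ 2 - 1 := by nlinarith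
  have key : Real.cosh a + Real.cosh b ≤
      Real.cosh s * (2 * Real.cosh t + (β ^ 2 - 1) * (t * Real.sinh t)) := by
    have hst0 : 0 ≤ t * Real.sinh t := mul_nonneg ht (Real.sinh_nonneg_iff.2 ht)
    rcases hs.eq_or_lt with rfl | hs
    · simp only [zero_sub, abs_neg, abs_of_nonneg ht, zero_add] at *
      have : a = t := le_antisymm has has'
      have : b = t := le_antisymm hbs hbs'
      subst a; subst b
      simp
      nlinarith [mul_nonneg hbeta hst0]
    rcases ht.eq_or_lt with rfl | ht
    · simp only [sub_zero, abs_of_nonneg hs.le, add_zero] at *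
      have : a = s := le_antisymm has has'
      have : b = s := le_antisymm hbs hbs'
      subst a; subst b
      simp
      linarith
    have ch : ∀ r : ℝ, 0 ≤ r → r ≤ s + t → |s - t| ≤ r → Real.cosh r ≤
        Real.cosh s * Real.cosh t +
          (r ^ 2 - s ^ 2 - t ^ 2) * (Real.sinh s * Real.sinh t / (2 * s * t)) := by
      intro r hr h1 h2
      have h3 : (s - t) ^ 2 ≤ r ^ 2 := sq_le_sq' (by linarith [neg_abs_le (s-t)]) (by linarith [le_abs_self (s-t)])
      have h4 : r ^ 2 ≤ (s + t) ^ 2 := by gcongr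
      have := aux_chord (r := r) (A := s + t) (B := s - t) (w := (r ^ 2 - (s - t) ^ 2) / (4 * s * t))
        (div_nonneg (by linarith) (by positivity))
        (by rw [div_le_one (by positivity)]; nlinarith) (by field_simp; ring)
      refine this.trans (le_of_eq ?_)
      rw [Real.cosh_add, Real.cosh_sub]
      field_simp
      ring
    have h1 := ch a ha has has'
    have h2 := ch b hb hbs hbs'
    have hsl : Real.sinh s * Real.sinh t / (2 * s * t) ≤ Real.cosh s * Real.sinh t / (2 * t) := by
      rw [div_le_div_iff₀ (by positivity) (by positivity)]
      have := mul_le_mul_of_nonneg_right (aux_sinh_le hs.le)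
        (mul_nonneg (Real.sinh_nonneg_iff.2 ht.le) (by positivity : 0 ≤ 2 * t))
      nlinarith
    have hsl0 : 0 ≤ Real.sinh s * Real.sinh t / (2 * s * t) := by
      have := Real.sinh_nonneg_iff.2 ht.le
      have := Real.sinh_nonneg_iff.2 hs.le
      positivity
    calc _ ≤ 2 * (Real.cosh s * Real.cosh t) + (a ^ 2 + b ^ 2 - 2 * s ^ 2 - 2 * t ^ 2) *
          (Real.sinh s * Real.sinh t / (2 * s * t)) := by linarith
      _ ≤ 2 * (Real.cosh s * Real.cosh t) + (2 * (β ^ 2 - 1) * t ^ 2) *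
          (Real.sinh s * Real.sinh t / (2 * s * t)) := by
            gcongr; linarith
      _ ≤ 2 * (Real.cosh s * Real.cosh t) + (2 * (β ^ 2 - 1) * t ^ 2) *
          (Real.cosh s * Real.sinh t / (2 * t)) := by gcongr
      _ = _ := by field_simp
  refine key.trans (mul_le_mul_of_nonneg_left ?_ hcs.le)
  have h1 := mul_le_mul_of_nonneg_left (aux_tsinh ht htβ) hbeta
  have h2 := Real.self_le_sinh_iff.2 ht
  have h3 := Real.cosh_add_sinh t
  nlinarith

theorem aux_tangent (a b : ℝ) :
    Real.cosh a + Real.sinh a * (b - a) ≤ Real.cosh b := by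
  have h1 := Real.add_one_le_exp (b - a)
  have h2 := Real.add_one_le_exp (-(b - a))
  have e1 : Real.exp b = Real.exp a * Real.exp (b - a) := by rw [← Real.exp_add]; ring_nf
  have e2 : Real.exp (-b) = Real.exp (-a) * Real.exp (-(b - a)) := by
    rw [← Real.exp_add]; ring_nf
  rw [Real.cosh_eq, Real.cosh_eq, Real.sinh_eq, e1, e2]
  have h3 := mul_le_mul_of_nonneg_left h1 (Real.exp_pos a).le
  have h4 := mul_le_mul_of_nonneg_left h2 (Real.exp_pos (-a)).le
  linarith

theorem aux_Kp {p s : ℝ} (hp : 1 < p) (hs : 0 ≤ s) :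
    s - 1 ≤ ((1 / p) * ((p - 1) / p) ^ (p - 1)) * s ^ p := by
  set q := (p - 1) / p with hq
  have hp0 : 0 < p := by linarith
  have hp1 : 0 < p - 1 := by linarith
  have hq0 : 0 < q := by positivity
  have hb := one_add_mul_self_le_rpow_one_add (s := s * q - 1) (p := p)
    (by nlinarith [mul_nonneg hs hq0.le]) hp.le
  have e : p * q = p - 1 := by rw [hq]; field_simp
  have e1 : 1 + p * (s * q - 1) = (p - 1) * (s - 1) := by linear_combination s * e
  rw [e1, show 1 + (s * q - 1) = s * q by ring, Real.mul_rpow hs hq0.le] at hb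
  have e2 : q ^ p = q ^ (p - 1) * q := by
    rw [← Real.rpow_add_one hq0.ne']; ring_nf
  have e3 : s ^ p * q ^ p = (p - 1) * ((1 / p) * q ^ (p - 1) * s ^ p) := by
    rw [e2, hq]; field_simp
  rw [e3] at hb
  exact le_of_mul_le_mul_left hb hp1

/-- Supporting-functional form of the smoothness inequality. -/
theorem aux_space {B : Type*} [NormedAddCommGroup B] [NormedSpace ℝ B] {β θ : ℝ} (hβ : 1 ≤ β)
    (hθ : 0 ≤ θ)
    (hsmooth : ∀ x y : B, ‖x + y‖ ^ 2 + ‖x - y‖ ^ 2 ≤ 2 * ‖x‖ ^ 2 + 2 * β ^ 2 * ‖y‖ ^ 2)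
    (x : B) : ∃ g : B →L[ℝ] ℝ, ∀ y : B, θ * ‖y‖ ≤ 2 * (1 / β) →
      Real.cosh (θ * ‖x + y‖) ≤ Real.cosh (θ * ‖x‖) *
        (1 + 2 * β ^ 2 * ((Real.exp (2 * (1 / β)) - 2 * (1 / β) - 1) / (2 * (1 / β)) ^ 2) * θ ^ 2
          * ‖y‖ ^ 2) + g y := by
  obtain ⟨g, hg1, hgx⟩ := exists_dual_vector'' ℝ x
  refine ⟨(Real.sinh (θ * ‖x‖) * θ) • g, fun y hy => ?_⟩
  have hρ : 0 < 2 * (1 / β) := by positivity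
  have hρ2 : 2 * (1 / β) ≤ 2 := by
    have : 1 / β ≤ 1 := by rw [div_le_one (by linarith)]; exact hβ
    linarith
  set ρ := 2 * (1 / β)
  have ht0 : 0 ≤ θ * ‖y‖ := by positivity
  have hab : ∀ z : B, z = y ∨ z = -y → θ * ‖x + z‖ ≤ θ * ‖x‖ + θ * ‖y‖ ∧
      |θ * ‖x‖ - θ * ‖y‖| ≤ θ * ‖x + z‖ := by
    intro z hz
    have hzy : ‖z‖ = ‖y‖ := by rcases hz with rfl | rfl <;> simp
    have h1 := norm_add_le x z
    have h2 := abs_norm_sub_norm_le x (-z)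
    rw [norm_neg, sub_neg_eq_add] at h2
    rw [hzy] at h1 h2
    constructor
    · nlinarith
    · rw [← mul_sub, abs_mul, abs_of_nonneg hθ]; gcongr
  have h1 := hab y (Or.inl rfl)
  have h2 := hab (-y) (Or.inr rfl)
  rw [← sub_eq_add_neg] at h2
  have tp := aux_two_point (a := θ * ‖x + y‖) (b := θ * ‖x - y‖) (s := θ * ‖x‖) (t := θ * ‖y‖) hβ
    (by positivity) (by positivity) (by positivity) ht0 (hy.trans hρ2)
    h1.1 h1.2 h2.1 h2.2 (by
      have := mul_le_mul_of_nonneg_left (hsmooth x y) (sq_nonneg θ)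
      nlinarith)
  have tg := aux_tangent (θ * ‖x‖) (θ * ‖x - y‖)
  have hge : ‖x‖ - g y ≤ ‖x - y‖ := by
    have := (le_abs_self _).trans ((g.le_opNorm (x - y)).trans
      (mul_le_mul_of_nonneg_right hg1 (norm_nonneg _)))
    rw [map_sub, hgx] at this
    simpa using this
  have hsi : 0 ≤ Real.sinh (θ * ‖x‖) * θ :=
    mul_nonneg (Real.sinh_nonneg_iff.2 (by positivity)) hθ
  have hge2 := mul_le_mul_of_nonneg_left hge hsi
  have hsc := aux_exp_scale (c := θ * ‖y‖ / ρ) (x := ρ) (by positivity)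
    (by rw [div_le_one hρ]; exact hy) hρ.le
  rw [div_mul_cancel₀ _ hρ.ne'] at hsc
  have hsc2 : Real.exp (θ * ‖y‖) - 1 - θ * ‖y‖ ≤
      ((Real.exp ρ - ρ - 1) / ρ ^ 2) * θ ^ 2 * ‖y‖ ^ 2 := by
    refine hsc.trans (le_of_eq ?_)
    field_simp
    ring
  have hc := Real.cosh_pos (θ * ‖x‖)
  have h4 := mul_le_mul_of_nonneg_left hsc2 (by positivity : 0 ≤ 2 * β ^ 2 * Real.cosh (θ * ‖x‖))
  simp only [_root_.smul_apply, smul_eq_mul]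
  nlinarith

/-- One step of the supermartingale, simple-function version. -/
theorem aux_step_simple {B : Type*} [NormedAddCommGroup B] [NormedSpace ℝ B] [CompleteSpace B]
    {Ω : Type*} {m mΩ : MeasurableSpace Ω} {P : Measure Ω} [IsProbabilityMeasure P]
    (hm : m ≤ mΩ) {θ R C V : ℝ} (hθ : 0 ≤ θ) (hC : 0 ≤ C)
    (hf : ∀ x : B, ∃ g : B →L[ℝ] ℝ, ∀ y : B, ‖y‖ ≤ R →
      Real.cosh (θ * ‖x + y‖) ≤ Real.cosh (θ * ‖x‖) * (1 + C * ‖y‖ ^ 2) + g y)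
    (D : Ω → B) (hD : Integrable D P) (hDR : ∀ᵐ ω ∂P, ‖D ω‖ ≤ R)
    (hD0 : ∀ A, MeasurableSet[m] A → ∫ ω in A, D ω ∂P = 0)
    (hDV : ∀ A, MeasurableSet[m] A → ∫ ω in A, ‖D ω‖ ^ 2 ∂P ≤ V * P.real A)
    (S : Ω → B) (F : Finset B) (hF : ∀ ω, S ω ∈ F)
    (hms : ∀ x, MeasurableSet[m] (S ⁻¹' {x})) :
    ∫ ω, Real.cosh (θ * ‖S ω + D ω‖) ∂P ≤ (1 + C * V) * ∫ ω, Real.cosh (θ * ‖S ω‖) ∂P := by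
  have hcont : ∀ x : B, Continuous fun y : B => Real.cosh (θ * ‖x + y‖) := fun x =>
    Real.continuous_cosh.comp (by fun_prop)
  have hint1 : ∀ x : B, Integrable (fun ω => Real.cosh (θ * ‖x + D ω‖)) P := by
    intro x
    refine Integrable.of_bound ((hcont x).comp_aestronglyMeasurable hD.1)
      (Real.cosh (θ * (‖x‖ + R))) ?_
    filter_upwards [hDR] with ω hω
    rw [Real.norm_of_nonneg (Real.cosh_pos _).le, Real.cosh_le_cosh]
    have h0 : 0 ≤ R := (norm_nonneg _).trans hω
    rw [abs_of_nonneg (by positivity), abs_of_nonneg (by positivity)]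
    gcongr
    exact (norm_add_le _ _).trans (by gcongr)
  have hint2 : Integrable (fun ω => ‖D ω‖ ^ 2) P := by
    refine Integrable.of_bound (hD.1.norm.pow 2) (R ^ 2) ?_
    filter_upwards [hDR] with ω hω
    rw [Real.norm_of_nonneg (by positivity)]
    gcongr
  have hU : (⋃ x ∈ F, S ⁻¹' {x}) = Set.univ := by
    ext ω; simp [hF]
  have hdisj : Set.Pairwise (F : Set B) (Function.onFun Disjoint fun x => S ⁻¹' {x}) := by
    intro x _ y _ hxy
    exact Disjoint.preimage _ (by simpa using hxy)
  have hon1 : ∀ x ∈ F, IntegrableOn (fun ω => Real.cosh (θ * ‖S ω + D ω‖)) (S ⁻¹' {x}) P := by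
    intro x _
    refine ((hint1 x).integrableOn).congr_fun (fun ω hω => ?_) (hm _ (hms x))
    simp only [Set.mem_preimage, Set.mem_singleton_iff] at hω
    simp [hω]
  have hon2 : ∀ x ∈ F, IntegrableOn (fun ω => Real.cosh (θ * ‖S ω‖)) (S ⁻¹' {x}) P := by
    intro x _
    refine ((integrable_const (Real.cosh (θ * ‖x‖))).integrableOn).congr_fun
      (fun ω hω => ?_) (hm _ (hms x))
    simp only [Set.mem_preimage, Set.mem_singleton_iff] at hω
    simp [hω]
  rw [← setIntegral_univ, ← hU,
    ← setIntegral_univ (f := fun ω => Real.cosh (θ * ‖S ω‖)), ← hU,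
    integral_biUnion_finset _ (fun x _ => hm _ (hms x)) hdisj hon1,
    integral_biUnion_finset _ (fun x _ => hm _ (hms x)) hdisj hon2, Finset.mul_sum]
  refine Finset.sum_le_sum fun x _ => ?_
  have e1 : ∫ ω in S ⁻¹' {x}, Real.cosh (θ * ‖S ω + D ω‖) ∂P =
      ∫ ω in S ⁻¹' {x}, Real.cosh (θ * ‖x + D ω‖) ∂P :=
    setIntegral_congr_fun (hm _ (hms x)) (fun ω hω => by
      simp only [Set.mem_preimage, Set.mem_singleton_iff] at hω
      simp [hω])
  have e2 : ∫ ω in S ⁻¹' {x}, Real.cosh (θ * ‖S ω‖) ∂P =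
      ∫ ω in S ⁻¹' {x}, Real.cosh (θ * ‖x‖) ∂P :=
    setIntegral_congr_fun (hm _ (hms x)) (fun ω hω => by
      simp only [Set.mem_preimage, Set.mem_singleton_iff] at hω
      simp [hω])
  rw [e1, e2]
  set A := S ⁻¹' {x} with hA
  obtain ⟨g, hg⟩ := hf x
  have i1 : IntegrableOn (fun ω => Real.cosh (θ * ‖x‖) * (1 + C * ‖D ω‖ ^ 2)) A P :=
    (((integrable_const 1).add (hint2.const_mul C)).const_mul _).integrableOn
  have i2 : IntegrableOn (fun ω => g (D ω)) A P := (g.integrable_comp hD).integrableOn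
  have hle : ∫ ω in A, Real.cosh (θ * ‖x + D ω‖) ∂P ≤
      ∫ ω in A, (Real.cosh (θ * ‖x‖) * (1 + C * ‖D ω‖ ^ 2) + g (D ω)) ∂P := by
    refine setIntegral_mono_ae (hint1 x).integrableOn (i1.add i2) ?_
    filter_upwards [hDR] with ω hω using hg _ hω
  refine hle.trans ?_
  rw [integral_add i1 i2, g.integral_comp_comm hD.integrableOn, hD0 A (hms x), map_zero, add_zero,
    integral_const_mul, integral_add (integrable_const _) (hint2.const_mul C).integrableOn,
    integral_const_mul, setIntegral_const, setIntegral_const]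
  have := hDV A (hms x)
  have hc := Real.cosh_pos (θ * ‖x‖)
  simp only [smul_eq_mul, mul_one]
  have h5 := mul_le_mul_of_nonneg_left this (mul_nonneg hc.le hC)
  nlinarith

theorem aux_step {B : Type*} [NormedAddCommGroup B] [NormedSpace ℝ B] [CompleteSpace B]
    {Ω : Type*} {m mΩ : MeasurableSpace Ω} {P : Measure Ω} [IsProbabilityMeasure P]
    (hm : m ≤ mΩ) {θ R C V c : ℝ} (hθ : 0 ≤ θ) (hC : 0 ≤ C) (hc : 0 ≤ c)
    (hf : ∀ x : B, ∃ g : B →L[ℝ] ℝ, ∀ y : B, ‖y‖ ≤ R →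
      Real.cosh (θ * ‖x + y‖) ≤ Real.cosh (θ * ‖x‖) * (1 + C * ‖y‖ ^ 2) + g y)
    (D : Ω → B) (hD : Integrable D P) (hDR : ∀ᵐ ω ∂P, ‖D ω‖ ≤ R)
    (hD0 : ∀ A, MeasurableSet[m] A → ∫ ω in A, D ω ∂P = 0)
    (hDV : ∀ A, MeasurableSet[m] A → ∫ ω in A, ‖D ω‖ ^ 2 ∂P ≤ V * P.real A)
    (S : Ω → B) (hS : StronglyMeasurable[m] S) (hSc : ∀ᵐ ω ∂P, ‖S ω‖ ≤ c) :
    ∫ ω, Real.cosh (θ * ‖S ω + D ω‖) ∂P ≤ (1 + C * V) * ∫ ω, Real.cosh (θ * ‖S ω‖) ∂P := by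
  have hcont : Continuous fun y : B => Real.cosh (θ * ‖y‖) :=
    Real.continuous_cosh.comp (by fun_prop)
  have hlim := hS.tendsto_approxBounded_ae hSc
  have hbd := fun n ω => hS.norm_approxBounded_le hc n ω
  have hsm : ∀ n, AEStronglyMeasurable (hS.approxBounded c n) P := fun n =>
    ((hS.approxBounded c n).stronglyMeasurable.mono hm).aestronglyMeasurable
  refine le_of_tendsto_of_tendsto'
    (f := fun n => ∫ ω, Real.cosh (θ * ‖hS.approxBounded c n ω + D ω‖) ∂P)
    (g := fun n => (1 + C * V) * ∫ ω, Real.cosh (θ * ‖hS.approxBounded c n ω‖) ∂P)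
    (b := Filter.atTop)
    (tendsto_integral_of_dominated_convergence (fun _ => Real.cosh (θ * (c + R)))
      (fun n => hcont.comp_aestronglyMeasurable ((hsm n).add hD.1)) (integrable_const _)
      (fun n => ?_) ?_)
    ((tendsto_integral_of_dominated_convergence (fun _ => Real.cosh (θ * c))
      (fun n => hcont.comp_aestronglyMeasurable (hsm n)) (integrable_const _)
      (fun n => ?_) ?_).const_mul _)
    (fun n => aux_step_simple hm hθ hC hf D hD hDR hD0 hDV (hS.approxBounded c n)
      (@SimpleFunc.range _ _ m (hS.approxBounded c n))
      (fun ω => @SimpleFunc.mem_range_self _ _ m (hS.approxBounded c n) ω)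
      (fun x => @SimpleFunc.measurableSet_fiber _ _ m (hS.approxBounded c n) x))
  · filter_upwards [hDR] with ω hω
    rw [Real.norm_of_nonneg (Real.cosh_pos _).le, Real.cosh_le_cosh]
    have h0 : 0 ≤ R := (norm_nonneg _).trans hω
    rw [abs_of_nonneg (by positivity), abs_of_nonneg (by positivity)]
    gcongr
    exact (norm_add_le _ _).trans (add_le_add (hbd n ω) hω)
  · filter_upwards [hlim] with ω hω
    exact (hcont.tendsto _).comp (hω.add_const (D ω))
  · refine Filter.Eventually.of_forall fun ω => ?_
    rw [Real.norm_of_nonneg (Real.cosh_pos _).le, Real.cosh_le_cosh]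
    rw [abs_of_nonneg (by positivity), abs_of_nonneg (by positivity)]
    gcongr
    exact hbd n ω
  · filter_upwards [hlim] with ω hω
    exact (hcont.tendsto _).comp hω
theorem truncB_eq {B : Type*} [NormedAddCommGroup B] (x : B) : truncB x = (max 1 ‖x‖)⁻¹ := by
  unfold truncB
  split_ifs with h
  · simp [h]
  · have : 0 < ‖x‖ := norm_pos_iff.2 h
    rcases le_total 1 ‖x‖ with h1 | h1
    · simp [h1]
    · simp [h1, this.ne']

theorem aux_trunc {B : Type*} [NormedAddCommGroup B] [NormedSpace ℝ B] {lam p : ℝ}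
    (hl : 0 < lam) (hp1 : 1 < p) (hp2 : p ≤ 2) (x : B) :
    ‖truncB (lam • x) • x‖ ≤ 1 / lam ∧
    ‖truncB (lam • x) • x‖ ^ 2 ≤ lam ^ (p - 2) * ‖x‖ ^ p ∧
    ‖truncB (lam • x) • x - x‖ ≤ Kp p * lam ^ (p - 1) * ‖x‖ ^ p := by
  have hK : 0 ≤ Kp p := by
    unfold Kp
    have : 0 < p - 1 := by linarith
    positivity
  have hsx : ‖lam • x‖ = lam * ‖x‖ := by rw [norm_smul, Real.norm_of_nonneg hl.le]
  rw [truncB_eq, hsx]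
  have hpp : lam ^ (p - 2) * ‖x‖ ^ p = (lam * ‖x‖) ^ p / lam ^ 2 := by
    rw [Real.mul_rpow hl.le (norm_nonneg _), Real.rpow_sub hl, Real.rpow_two]; ring
  have hpp1 : Kp p * lam ^ (p - 1) * ‖x‖ ^ p = Kp p * (lam * ‖x‖) ^ p / lam := by
    rw [Real.mul_rpow hl.le (norm_nonneg _), Real.rpow_sub hl, Real.rpow_one]; ring
  rw [hpp, hpp1]
  have hs0 : 0 ≤ lam * ‖x‖ := by positivity
  rcases le_total (lam * ‖x‖) 1 with h | h
  · rw [max_eq_left h]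
    simp only [inv_one, one_smul, sub_self, norm_zero]
    refine ⟨?_, ?_, by positivity⟩
    · rw [le_div_iff₀ hl]; linarith
    · rw [le_div_iff₀ (by positivity), ← mul_pow, mul_comm, ← Real.rpow_two]
      rcases hs0.eq_or_lt with h0 | h0
      · rw [← h0, Real.zero_rpow (by norm_num), Real.zero_rpow (by linarith)]
      · exact Real.rpow_le_rpow_of_exponent_ge h0 h hp2
  · rw [max_eq_right h]
    have hx : 0 < ‖x‖ := by
      by_contra h'
      have : ‖x‖ = 0 := le_antisymm (not_lt.1 h') (norm_nonneg _)
      rw [this] at h; norm_num at h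
    have hn : ‖(lam * ‖x‖)⁻¹ • x‖ = 1 / lam := by
      rw [norm_smul, Real.norm_of_nonneg (by positivity)]; field_simp
    rw [hn]
    refine ⟨le_rfl, ?_, ?_⟩
    · rw [div_pow, one_pow]
      gcongr
      exact Real.one_le_rpow h (by linarith)
    · have e : (lam * ‖x‖)⁻¹ • x - x = ((lam * ‖x‖)⁻¹ - 1) • x := by rw [sub_smul, one_smul]
      have h1 : (lam * ‖x‖)⁻¹ ≤ 1 := inv_le_one_of_one_le₀ h
      rw [e, norm_smul, Real.norm_of_nonpos (by linarith), le_div_iff₀ hl]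
      have := aux_Kp hp1 hs0
      have e2 : -((lam * ‖x‖)⁻¹ - 1) * ‖x‖ * lam = lam * ‖x‖ - 1 := by field_simp; ring
      rw [e2]; exact this

theorem aux_cond {B : Type*} [NormedAddCommGroup B] [NormedSpace ℝ B] [CompleteSpace B]
    {Ω : Type*} {m mΩ : MeasurableSpace Ω} {P : Measure Ω} [IsProbabilityMeasure P]
    (hm : m ≤ mΩ) {lam p v : ℝ} (hl : 0 < lam) (hp1 : 1 < p) (hp2 : p ≤ 2)
    (X : Ω → B) (μ : B) (hX : Integrable X P)
    (hXp : Integrable (fun ω => ‖X ω‖ ^ p) P) (hmean : P[X | m] =ᵐ[P] fun _ => μ)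
    (hmom : ∀ᵐ ω ∂P, (P[fun ω' => ‖X ω'‖ ^ p | m]) ω ≤ v) (T : Ω → B)
    (hT : T = fun ω => truncB (lam • X ω) • X ω) :
    Integrable T P ∧ (∀ᵐ ω ∂P, ‖(P[T | m]) ω - μ‖ ≤ Kp p * lam ^ (p - 1) * v) ∧
    (∀ᵐ ω ∂P, ‖T ω - (P[T | m]) ω‖ ≤ 2 / lam) ∧
    (∀ A, MeasurableSet[m] A → ∫ ω in A, (T ω - (P[T | m]) ω) ∂P = 0) ∧
    (∀ A, MeasurableSet[m] A → ∫ ω in A, ‖T ω - (P[T | m]) ω‖ ^ 2 ∂P ≤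
      4 * lam ^ (p - 2) * v * P.real A) := by
  have hK : 0 ≤ Kp p := by
    unfold Kp
    have : 0 < p - 1 := by linarith
    positivity
  have hb1 : ∀ ω, ‖T ω‖ ≤ 1 / lam := fun ω => by rw [hT]; exact (aux_trunc hl hp1 hp2 (X ω)).1
  have hb2 : ∀ ω, ‖T ω‖ ^ 2 ≤ lam ^ (p - 2) * ‖X ω‖ ^ p := fun ω => by
    rw [hT]; exact (aux_trunc hl hp1 hp2 (X ω)).2.1
  have hb3 : ∀ ω, ‖T ω - X ω‖ ≤ Kp p * lam ^ (p - 1) * ‖X ω‖ ^ p := fun ω => by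
    rw [hT]; exact (aux_trunc hl hp1 hp2 (X ω)).2.2
  have hTm : AEStronglyMeasurable T P := by
    have hc : Continuous fun x : B => truncB (lam • x) • x := by
      simp only [truncB_eq]
      have : ∀ x : B, max 1 ‖lam • x‖ ≠ 0 := fun x => (lt_max_of_lt_left one_pos).ne'
      fun_prop (disch := assumption)
    rw [hT]
    exact hc.comp_aestronglyMeasurable hX.1
  have hTi : Integrable T P := Integrable.of_bound hTm _ (Filter.Eventually.of_forall hb1)
  have hMb : ∀ᵐ ω ∂P, ‖(P[T | m]) ω‖ ≤ 1 / lam :=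
    ae_bdd_norm_condExp_of_ae_bdd_norm (Filter.Eventually.of_forall hb1)
  have hT2 : Integrable (fun ω => ‖T ω‖ ^ 2) P := by
    refine Integrable.of_bound (hTm.norm.pow 2) ((1 / lam) ^ 2) (Filter.Eventually.of_forall ?_)
    intro ω
    rw [Real.norm_of_nonneg (by positivity)]
    gcongr
    exact hb1 ω
  have hMi : Integrable (P[T | m]) P := integrable_condExp
  have hM2 : Integrable (fun ω => ‖(P[T | m]) ω‖ ^ 2) P := by
    refine Integrable.of_bound (hMi.1.norm.pow 2) ((1 / lam) ^ 2) ?_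
    filter_upwards [hMb] with ω hω
    rw [Real.norm_of_nonneg (by positivity)]
    gcongr
  refine ⟨hTi, ?_, ?_, ?_, ?_⟩
  · have h1 := condExp_sub hTi hX m
    have h2 := norm_condExp_le (μ := P) (m := m) (T - X)
    have h3 : P[fun ω => ‖(T - X) ω‖ | m] ≤ᵐ[P] P[(Kp p * lam ^ (p - 1)) • fun ω => ‖X ω‖ ^ p | m] :=
      condExp_mono (hTi.sub hX).norm (hXp.smul _) (Filter.Eventually.of_forall hb3)
    have h4 := condExp_smul (μ := P) (Kp p * lam ^ (p - 1)) (fun ω => ‖X ω‖ ^ p) m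
    filter_upwards [h1, h2, h3, h4, hmean, hmom] with ω w1 w2 w3 w4 w5 w6
    have e : (P[T | m]) ω - μ = (P[T - X | m]) ω := by rw [w1, Pi.sub_apply, w5]
    rw [e]
    refine w2.trans (w3.trans ?_)
    refine (le_of_eq w4).trans ?_
    rw [Pi.smul_apply, smul_eq_mul]
    gcongr
  · filter_upwards [hMb] with ω hω
    calc _ ≤ ‖T ω‖ + ‖(P[T | m]) ω‖ := norm_sub_le _ _
      _ ≤ 1 / lam + 1 / lam := add_le_add (hb1 ω) hω
      _ = _ := by ring
  · intro A hA
    rw [integral_sub hTi.integrableOn hMi.integrableOn, setIntegral_condExp hm hTi hA, sub_self]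
  · intro A hA
    have hj : ∫ ω in A, ‖(P[T | m]) ω‖ ^ 2 ∂P ≤ ∫ ω in A, ‖T ω‖ ^ 2 ∂P := by
      have := setIntegral_norm_condExp_rpow_le (μ := P) (m := m) (p := 2) (f := T) (by norm_num) hA
        (by simpa using hT2)
      simpa using this
    have hTA : ∫ ω in A, ‖T ω‖ ^ 2 ∂P ≤ lam ^ (p - 2) * (v * P.real A) := by
      calc _ ≤ ∫ ω in A, lam ^ (p - 2) * ‖X ω‖ ^ p ∂P :=
            setIntegral_mono hT2.integrableOn (hXp.const_mul _).integrableOn hb2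
        _ = lam ^ (p - 2) * ∫ ω in A, ‖X ω‖ ^ p ∂P := integral_const_mul _ _
        _ = lam ^ (p - 2) * ∫ ω in A, (P[fun ω' => ‖X ω'‖ ^ p | m]) ω ∂P := by
            rw [setIntegral_condExp hm hXp hA]
        _ ≤ lam ^ (p - 2) * ∫ ω in A, v ∂P := by
            refine mul_le_mul_of_nonneg_left ?_ (by positivity)
            exact setIntegral_mono_ae integrable_condExp.integrableOn
              (integrable_const _).integrableOn hmom
        _ = _ := by rw [setIntegral_const, smul_eq_mul, mul_comm v]
    have hle : ∫ ω in A, ‖T ω - (P[T | m]) ω‖ ^ 2 ∂P ≤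
        ∫ ω in A, (2 * ‖T ω‖ ^ 2 + 2 * ‖(P[T | m]) ω‖ ^ 2) ∂P := by
      refine integral_mono_of_nonneg (Filter.Eventually.of_forall fun ω => by positivity)
        ((hT2.const_mul 2).add (hM2.const_mul 2)).integrableOn
        (Filter.Eventually.of_forall fun ω => ?_)
      have := norm_sub_le (T ω) ((P[T | m]) ω)
      have h0 := norm_nonneg (T ω - (P[T | m]) ω)
      have := pow_le_pow_left₀ h0 this 2
      have := sq_nonneg (‖T ω‖ - ‖(P[T | m]) ω‖)
      simp only
      nlinarith
    refine hle.trans ?_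
    rw [integral_add (hT2.const_mul 2).integrableOn (hM2.const_mul 2).integrableOn,
      integral_const_mul, integral_const_mul]
    linarith

theorem aux_mgf {B : Type*} [NormedAddCommGroup B] [NormedSpace ℝ B] [CompleteSpace B]
    {Ω : Type*} {mΩ : MeasurableSpace Ω} {P : Measure Ω} [IsProbabilityMeasure P]
    (ℱ : Filtration ℕ mΩ) {θ R C V : ℝ} (hθ : 0 ≤ θ) (hC : 0 ≤ C) (hR : 0 ≤ R) (hV : 0 ≤ V)
    (hf : ∀ x : B, ∃ g : B →L[ℝ] ℝ, ∀ y : B, ‖y‖ ≤ R →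
      Real.cosh (θ * ‖x + y‖) ≤ Real.cosh (θ * ‖x‖) * (1 + C * ‖y‖ ^ 2) + g y)
    (D : ℕ → Ω → B) (hDm : ∀ n, StronglyMeasurable[ℱ (n + 1)] (D n))
    (hD : ∀ n, Integrable (D n) P) (hDR : ∀ n, ∀ᵐ ω ∂P, ‖D n ω‖ ≤ R)
    (hD0 : ∀ n, ∀ A, MeasurableSet[ℱ n] A → ∫ ω in A, D n ω ∂P = 0)
    (hDV : ∀ n, ∀ A, MeasurableSet[ℱ n] A → ∫ ω in A, ‖D n ω‖ ^ 2 ∂P ≤ V * P.real A) (n : ℕ) :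
    StronglyMeasurable[ℱ n] (fun ω => ∑ k ∈ Finset.range n, D k ω) ∧
    (∀ᵐ ω ∂P, ‖∑ k ∈ Finset.range n, D k ω‖ ≤ n * R) ∧
    ∫ ω, Real.cosh (θ * ‖∑ k ∈ Finset.range n, D k ω‖) ∂P ≤ (1 + C * V) ^ n := by
  induction n with
  | zero =>
    refine ⟨?_, ?_, ?_⟩
    · simpa using stronglyMeasurable_const
    · simp
    · simp
  | succ n ih =>
    obtain ⟨h1, h2, h3⟩ := ih
    simp only [Finset.sum_range_succ]
    refine ⟨(h1.mono (ℱ.mono (Nat.le_succ n))).add (hDm n), ?_, ?_⟩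
    · filter_upwards [h2, hDR n] with ω w1 w2
      refine (norm_add_le _ _).trans ?_
      push_cast
      linarith
    · refine (aux_step (ℱ.le n) hθ hC (by positivity : (0:ℝ) ≤ n * R) hf (D n) (hD n) (hDR n)
        (hD0 n) (hDV n) _ h1 h2).trans ?_
      rw [pow_succ, mul_comm]
      gcongr

theorem aux_numeric {β A K c L lam v p N : ℝ} (hβ : 0 < β) (hA : 0 < A) (hK : 0 ≤ K)
    (hL : 0 < L) (hv : 0 < v) (hp : 1 < p) (hN : 0 < N)
    (hAdef : A = β * c + K * 2 ^ (p - 1))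
    (hlam : lam = (L * β / (2 * N * v * A)) ^ (1 / p)) :
    0 < lam ∧ (β / lam) * (L + N * (2 * c * lam ^ p * v)) / N + K * lam ^ (p - 1) * v ≤
      2 * (2 * v * A) ^ (1 / p) * (β * L / N) ^ ((p - 1) / p) := by
  have hl : 0 < lam := by rw [hlam]; positivity
  refine ⟨hl, ?_⟩
  have hp0 : p ≠ 0 := by linarith
  have hlp : lam ^ p = L * β / (2 * N * v * A) := by
    rw [hlam, ← Real.rpow_mul (by positivity), one_div_mul_cancel hp0, Real.rpow_one]
  have hl1 : lam ^ (p - 1) = lam ^ p / lam := by rw [Real.rpow_sub hl, Real.rpow_one]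
  have hK2 : K ≤ K * 2 ^ (p - 1) := by
    have : (1:ℝ) ≤ 2 ^ (p - 1) := Real.one_le_rpow (by norm_num) (by linarith)
    nlinarith
  have e : (2 * v * A) ^ (1 / p) * (β * L / N) ^ ((p - 1) / p) = β * L / (N * lam) := by
    have hQ : 0 < β * L / N := by positivity
    have hW : 0 < 2 * v * A := by positivity
    have e1 : lam = (β * L / N) ^ (1 / p) / (2 * v * A) ^ (1 / p) := by
      rw [hlam, ← Real.div_rpow hQ.le hW.le]; congr 1; field_simp
    have e2 : (p - 1) / p = 1 - 1 / p := by field_simp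
    rw [e2, Real.rpow_sub hQ, Real.rpow_one, e1]
    have := Real.rpow_pos_of_pos hQ (1 / p)
    have := Real.rpow_pos_of_pos hW (1 / p)
    field_simp
  rw [mul_assoc 2 ((2 * v * A) ^ (1 / p)), e, hl1]
  have hlpos : 0 < lam ^ p := by positivity
  calc _ = β * L / (N * lam) + (2 * (β * c) + K) * (lam ^ p / lam * v) := by field_simp; ring
    _ ≤ β * L / (N * lam) + (2 * A) * (lam ^ p / lam * v) := by
        gcongr
        rw [hAdef]; linarith
    _ = _ := by rw [hlp]; field_simp; ring

/-- **Optimized bound under a raw (uncentered) `p`-th moment bound.** With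
`λ = (log(2/δ)β/(2Nv(β𝔠_p + K_p2^{p-1})))^{1/p}`, with probability at least `1 - δ`,
`‖μ̂_N - μ‖ ≤ 2(2v(β𝔠_p + K_p2^{p-1}))^{1/p}(β log(2/δ)/N)^{(p-1)/p}`. -/
theorem stmt16
    {B : Type*} [NormedAddCommGroup B] [NormedSpace ℝ B] [CompleteSpace B]
    [TopologicalSpace.SeparableSpace B]
    {Ω : Type*} {mΩ : MeasurableSpace Ω} {P : Measure Ω} [IsProbabilityMeasure P]
    (β : ℝ) (hβ : 1 ≤ β)
    (hsmooth : ∀ x y : B, ‖x + y‖ ^ 2 + ‖x - y‖ ^ 2 ≤ 2 * ‖x‖ ^ 2 + 2 * β ^ 2 * ‖y‖ ^ 2)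
    (ℱ : Filtration ℕ mΩ) (X : ℕ → Ω → B) (μ : B) (p v : ℝ)
    (hp1 : 1 < p) (hp2 : p ≤ 2) (hv : 0 < v)
    (hadapted : ∀ n : ℕ, 1 ≤ n → StronglyMeasurable[ℱ n] (X n))
    (hint : ∀ n : ℕ, 1 ≤ n → Integrable (X n) P)
    (hmom : ∀ n : ℕ, 1 ≤ n → Integrable (fun ω => ‖X n ω‖ ^ p) P)
    (hcondmean : ∀ n : ℕ, P[X (n + 1) | ℱ n] =ᵐ[P] fun _ => μ)
    (hcondmom : ∀ n : ℕ, ∀ᵐ ω ∂P, (P[fun ω' => ‖X (n + 1) ω'‖ ^ p | ℱ n]) ω ≤ v)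
    (δ : ℝ) (hδ : δ ∈ Set.Ioc (0 : ℝ) 1) (N : ℕ) (hN : 1 ≤ N) (lam : ℝ)
    (hlam : lam = (Real.log (2 / δ) * β /
      (2 * (N : ℝ) * v * (β * frakC p (1 / β) + Kp p * 2 ^ (p - 1)))) ^ (1 / p)) :
    ENNReal.ofReal (1 - δ) ≤
      P {ω |
        ‖(N : ℝ)⁻¹ • (∑ m ∈ Finset.range N, truncB (lam • X (m + 1) ω) • X (m + 1) ω) - μ‖ ≤
          2 * (2 * v * (β * frakC p (1 / β) + Kp p * 2 ^ (p - 1))) ^ (1 / p) *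
            (β * Real.log (2 / δ) / (N : ℝ)) ^ ((p - 1) / p)} := by
  obtain ⟨hδ0, hδ1⟩ := hδ
  have hβ0 : 0 < β := by linarith
  have hNpos : (0:ℝ) < N := by exact_mod_cast hN
  have hL : 0 < Real.log (2 / δ) := Real.log_pos (by rw [lt_div_iff₀ hδ0]; linarith)
  set φ : ℝ := (Real.exp (2 * (1 / β)) - 2 * (1 / β) - 1) / (2 * (1 / β)) ^ 2 with hφ
  have hφ0 : 0 ≤ φ := by
    have := Real.add_one_le_exp (2 * (1 / β))
    exact div_nonneg (by linarith) (by positivity)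
  have hfr : frakC p (1 / β) = 2 ^ (p + 1) * φ := by rw [hφ]; unfold frakC; ring
  have hfr4 : 4 * φ ≤ frakC p (1 / β) := by
    rw [hfr]
    gcongr
    calc (4:ℝ) = 2 ^ (2:ℝ) := by norm_num
      _ ≤ 2 ^ (p + 1) := Real.rpow_le_rpow_of_exponent_le (by norm_num) (by linarith)
  have hKpos : 0 < Kp p := by
    unfold Kp
    have : 0 < p - 1 := by linarith
    positivity
  set c := frakC p (1 / β)
  have hc0 : 0 ≤ c := by linarith
  have hA : 0 < β * c + Kp p * 2 ^ (p - 1) := by positivity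
  obtain ⟨hl, hnum⟩ := aux_numeric hβ0 hA hKpos.le hL hv hp1 hNpos rfl hlam
  set L := Real.log (2 / δ) with hLdef
  set T : ℕ → Ω → B := fun k ω => truncB (lam • X (k + 1) ω) • X (k + 1) ω with hT
  have hcond := fun k => aux_cond (ℱ.le k) hl hp1 hp2 (X (k + 1)) μ (hint _ (by omega))
    (hmom _ (by omega)) (hcondmean k) (hcondmom k) (T k) rfl
  set D : ℕ → Ω → B := fun k ω => T k ω - (P[T k | ℱ k]) ω with hDdef
  have hθ : 0 < lam / β := by positivity
  have hTm : ∀ n, StronglyMeasurable[ℱ (n + 1)] (T n) := by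
    intro n
    have hcn : Continuous fun x : B => truncB (lam • x) • x := by
      simp only [truncB_eq]
      have : ∀ x : B, max 1 ‖lam • x‖ ≠ 0 := fun x => (lt_max_of_lt_left one_pos).ne'
      fun_prop (disch := assumption)
    exact hcn.comp_stronglyMeasurable (hadapted (n + 1) (by omega))
  have hf : ∀ x : B, ∃ g : B →L[ℝ] ℝ, ∀ y : B, ‖y‖ ≤ 2 / lam →
      Real.cosh (lam / β * ‖x + y‖) ≤ Real.cosh (lam / β * ‖x‖) *
        (1 + (2 * β ^ 2 * φ * (lam / β) ^ 2) * ‖y‖ ^ 2) + g y := by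
    intro x
    obtain ⟨g, hg⟩ := aux_space hβ hθ.le hsmooth x
    refine ⟨g, fun y hy => hg y ?_⟩
    calc lam / β * ‖y‖ ≤ lam / β * (2 / lam) := by gcongr
      _ = 2 * (1 / β) := by field_simp
  obtain ⟨hSm, hSb, hSI⟩ := aux_mgf ℱ hθ.le (by positivity) (by positivity)
    (by positivity : 0 ≤ 4 * lam ^ (p - 2) * v) hf D
    (fun n => (hTm n).sub (stronglyMeasurable_condExp.mono (ℱ.mono (Nat.le_succ n))))
    (fun n => (hcond n).1.sub integrable_condExp) (fun n => (hcond n).2.2.1)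
    (fun n => (hcond n).2.2.2.1) (fun n => (hcond n).2.2.2.2) N
  set S : Ω → B := fun ω => ∑ k ∈ Finset.range N, D k ω with hS
  set q := 2 * c * lam ^ p * v with hq
  have hI : ∫ ω, Real.cosh (lam / β * ‖S ω‖) ∂P ≤ Real.exp (N * q) := by
    refine hSI.trans ?_
    have h1 : 1 + (2 * β ^ 2 * φ * (lam / β) ^ 2) * (4 * lam ^ (p - 2) * v) ≤ Real.exp q := by
      have e : (2 * β ^ 2 * φ * (lam / β) ^ 2) * (4 * lam ^ (p - 2) * v) =
          2 * (4 * φ) * lam ^ p * v := by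
        rw [Real.rpow_sub hl, Real.rpow_two]; field_simp
      have h2 : 2 * (4 * φ) * lam ^ p * v ≤ q := by rw [hq]; gcongr
      rw [e]
      linarith [Real.add_one_le_exp q]
    calc _ ≤ Real.exp q ^ N := by gcongr
      _ = _ := by rw [← Real.exp_nat_mul]
  set r := (β / lam) * (L + N * q) with hr
  have hcont : Continuous fun y : B => Real.cosh (lam / β * ‖y‖) :=
    Real.continuous_cosh.comp (by fun_prop)
  have hSi : Integrable (fun ω => Real.cosh (lam / β * ‖S ω‖)) P := by
    refine Integrable.of_bound
      (hcont.comp_aestronglyMeasurable (hSm.mono (ℱ.le N)).aestronglyMeasurable)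
      (Real.cosh (lam / β * (N * (2 / lam)))) ?_
    filter_upwards [hSb] with ω hω
    rw [Real.norm_of_nonneg (Real.cosh_pos _).le, Real.cosh_le_cosh,
      abs_of_nonneg (by positivity), abs_of_nonneg (by positivity)]
    gcongr
  have hmk := mul_meas_ge_le_integral_of_nonneg
    (Filter.Eventually.of_forall fun ω => (Real.cosh_pos (lam / β * ‖S ω‖)).le) hSi
    (Real.exp (L + N * q) / 2)
  have hexpL : Real.exp L = 2 / δ := Real.exp_log (by positivity)
  have hbad : P.real {ω | r < ‖S ω‖} ≤ δ := by
    have hsub : P.real {ω | r < ‖S ω‖} ≤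
        P.real {ω | Real.exp (L + N * q) / 2 ≤ Real.cosh (lam / β * ‖S ω‖)} := by
      refine measureReal_mono ?_
      intro ω hω
      simp only [Set.mem_ofPred_eq] at hω ⊢
      have h1 : L + N * q ≤ lam / β * ‖S ω‖ := by
        calc L + N * q = lam / β * r := by rw [hr]; field_simp
          _ ≤ _ := by gcongr
      have h2 := Real.exp_le_exp.2 h1
      have h3 := Real.exp_pos (-(lam / β * ‖S ω‖))
      rw [Real.cosh_eq]
      linarith
    refine hsub.trans ?_
    have h4 := hmk.trans hI
    rw [Real.exp_add, hexpL] at h4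
    have h5 := Real.exp_pos (N * q)
    have h6 : 2 / δ * Real.exp (N * q) / 2 = Real.exp (N * q) / δ := by field_simp
    rw [h6] at h4
    rw [Real.exp_add, hexpL, h6]
    rw [div_mul_eq_mul_div, div_le_iff₀ hδ0] at h4
    exact le_of_mul_le_mul_left h4 h5
  have hms : MeasurableSet {ω | r < ‖S ω‖} :=
    measurableSet_lt measurable_const (hSm.mono (ℱ.le N)).norm.measurable
  have hgood : ENNReal.ofReal (1 - δ) ≤ P {ω | r < ‖S ω‖}ᶜ := by
    rw [← ofReal_measureReal, probReal_compl_eq_one_sub hms]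
    exact ENNReal.ofReal_le_ofReal (by linarith)
  refine hgood.trans (measure_mono_ae ?_)
  have hbias : ∀ᵐ ω ∂P, ∀ k, ‖(P[T k | ℱ k]) ω - μ‖ ≤ Kp p * lam ^ (p - 1) * v :=
    ae_all_iff.2 fun k => (hcond k).2.1
  filter_upwards [hbias] with ω hω hgd
  have hgd' : ‖S ω‖ ≤ r := not_lt.1 hgd
  show ‖(N : ℝ)⁻¹ • (∑ k ∈ Finset.range N, T k ω) - μ‖ ≤ _
  refine le_trans ?_ hnum
  have e : (N : ℝ)⁻¹ • (∑ k ∈ Finset.range N, T k ω) - μ =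
      (N : ℝ)⁻¹ • (S ω + ∑ k ∈ Finset.range N, ((P[T k | ℱ k]) ω - μ)) := by
    have : S ω + ∑ k ∈ Finset.range N, ((P[T k | ℱ k]) ω - μ) =
        (∑ k ∈ Finset.range N, T k ω) - (N : ℝ) • μ := by
      rw [hS]
      simp only [hDdef]
      rw [← Finset.sum_add_distrib]
      simp only [sub_add_sub_cancel]
      rw [Finset.sum_sub_distrib, Finset.sum_const, Finset.card_range, Nat.cast_smul_eq_nsmul]
    rw [this, smul_sub, smul_smul, inv_mul_cancel₀ hNpos.ne', one_smul]
  rw [e, norm_smul, Real.norm_of_nonneg (by positivity)]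
  have hb : ‖∑ k ∈ Finset.range N, ((P[T k | ℱ k]) ω - μ)‖ ≤ N * (Kp p * lam ^ (p - 1) * v) := by
    refine (norm_sum_le_of_le _ fun k _ => hω k).trans (le_of_eq ?_)
    simp
  calc (N : ℝ)⁻¹ * ‖S ω + ∑ k ∈ Finset.range N, ((P[T k | ℱ k]) ω - μ)‖
      ≤ (N : ℝ)⁻¹ * (r + N * (Kp p * lam ^ (p - 1) * v)) := by
        gcongr
        exact (norm_add_le _ _).trans (add_le_add hgd' hb)
    _ = r / N + Kp p * lam ^ (p - 1) * v := by field_simp
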